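/- Let A be a GLD-lattice, let N be the canonical neighborhood map of A, and define □_Z X = {F : F is a GLD-filter of A and X ∈ N(F)} for sets X of GLD-filters. Then the powerset of the set of GLD-filters of A, with its Boolean set operations and the operator □_Z, is a GL-algebra; that is, □_Z(univ) = univ, □_Z(X ∩ Y) = □_Z X ∩ □_Z Y for all X, Y, and □_Z((□_Z X)ᶜ ∪ X) ⊆ □_Z X for all X. -/

import Mathlib

/-!
Write `C x y = η x \ η y`, `□Z` for the box induced by the canonical neighborhoods and
`T n = C (□ⁿ⊥) (◇ⁿ⊤)`. Then `C (□x) (◇y) ⊆ □Z (C x y)`, so `T (n + 1) ⊆ □Z (T n)`; moreover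
`T 0 = ∅`, and the `T n` cover all GLD-filters.

For the Löb inequality, let `C x y` witness `F ∈ □Z ((□Z X)ᶜ ∪ X)`, so that `C x y ∩ □Z X ⊆ X`. By
transitivity the set `S = C x y ∩ C (□x) (◇y)` satisfies `F ∈ □Z S` and `S ⊆ □Z S`. By induction
`S ∩ T n ⊆ X` for all `n`, because `S ∩ T (n + 1) ⊆ □Z (S ∩ T n) ⊆ □Z X`. Hence `S ⊆ X` and
`F ∈ □Z X`.
-/

/-- A GLD-lattice structure on a bounded distributive lattice `A`, given by the
modal operations `box` and `dia`. -/
structure IsGLDLattice {A : Type*} [DistribLattice A] [BoundedOrder A]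
    (box dia : A → A) : Prop where
  box_top : box ⊤ = ⊤
  dia_bot : dia ⊥ = ⊥
  box_sup_le : ∀ x y : A, box (x ⊔ y) ≤ box x ⊔ dia y
  inf_dia_le : ∀ x y : A, box x ⊓ dia y ≤ dia (x ⊓ y)
  dia_sup : ∀ x y : A, dia (x ⊔ y) = dia x ⊔ dia y
  box_inf : ∀ x y : A, box (x ⊓ y) = box x ⊓ box y
  dia_dia_le : ∀ x : A, dia (dia x) ≤ dia x
  box_le_box_box : ∀ x : A, box x ≤ box (box x)
  isLUB_inf_boxIter : ∀ x : A, IsLUB {y : A | ∃ n : ℕ, y = x ⊓ box^[n] ⊥} x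
  isGLB_sup_diaIter : ∀ x : A, IsGLB {y : A | ∃ n : ℕ, y = x ⊔ dia^[n] ⊤} x

/-- A GLD-filter of `A`: a prime filter `F` such that for some `n`,
`◇ⁿ⊤ ∉ F` and `□ⁿ⊥ ∈ F`. -/
structure IsGLDFilter {A : Type*} [DistribLattice A] [BoundedOrder A]
    (box dia : A → A) (F : Set A) : Prop where
  nonempty : F.Nonempty
  mem_of_le : ∀ x y : A, x ∈ F → x ≤ y → y ∈ F
  inf_mem : ∀ x y : A, x ∈ F → y ∈ F → x ⊓ y ∈ F
  bot_not_mem : ⊥ ∉ F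
  prime : ∀ x y : A, x ⊔ y ∈ F → x ∈ F ∨ y ∈ F
  gld : ∃ n : ℕ, dia^[n] ⊤ ∉ F ∧ box^[n] ⊥ ∈ F

/-- The type of GLD-filters of `A`. -/
def GLDFilter (A : Type*) [DistribLattice A] [BoundedOrder A] (box dia : A → A) :=
  {F : Set A // IsGLDFilter box dia F}

/-- `eta x` is the set of GLD-filters containing `x`. -/
def eta {A : Type*} [DistribLattice A] [BoundedOrder A] (box dia : A → A)
    (x : A) : Set (GLDFilter A box dia) :=
  {F | x ∈ F.1}

/-- A GLD-filter frame of `A`: each `N F` is a filter of the powerset of the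
set of GLD-filters, and the neighborhood conditions relating `N` to `box`,
`dia` and `eta` hold. -/
structure IsGLDFilterFrame {A : Type*} [DistribLattice A] [BoundedOrder A]
    (box dia : A → A)
    (N : GLDFilter A box dia → Set (Set (GLDFilter A box dia))) : Prop where
  nonempty : ∀ F, (N F).Nonempty
  mem_of_subset : ∀ F, ∀ X Y : Set (GLDFilter A box dia),
    X ∈ N F → X ⊆ Y → Y ∈ N F
  inter_mem : ∀ F, ∀ X Y : Set (GLDFilter A box dia),
    X ∈ N F → Y ∈ N F → X ∩ Y ∈ N F
  eta_mem : ∀ F x, box x ∈ F.1 → eta box dia x ∈ N F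
  compl_eta_mem : ∀ F x, dia x ∉ F.1 → (eta box dia x)ᶜ ∈ N F
  eta_not_mem : ∀ F x, box x ∉ F.1 → eta box dia x ∉ N F
  compl_eta_not_mem : ∀ F x, dia x ∈ F.1 → (eta box dia x)ᶜ ∉ N F

/-- The box operator on the powerset of the set of GLD-filters induced by a
neighborhood map `N`. -/
def boxZ {A : Type*} [DistribLattice A] [BoundedOrder A] (box dia : A → A)
    (N : GLDFilter A box dia → Set (Set (GLDFilter A box dia))) :
    Set (GLDFilter A box dia) → Set (GLDFilter A box dia) :=
  fun X => {F | X ∈ N F}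

/-- The diamond operator induced by a neighborhood map `N`. -/
def diaZ {A : Type*} [DistribLattice A] [BoundedOrder A] (box dia : A → A)
    (N : GLDFilter A box dia → Set (Set (GLDFilter A box dia))) :
    Set (GLDFilter A box dia) → Set (GLDFilter A box dia) :=
  fun X => (boxZ box dia N Xᶜ)ᶜ

/-- The canonical neighborhood map of a GLD-lattice. -/
def canonN {A : Type*} [DistribLattice A] [BoundedOrder A] (box dia : A → A)
    (F : GLDFilter A box dia) : Set (Set (GLDFilter A box dia)) :=
  {X | ∃ x y : A, box x ∈ F.1 ∧ dia y ∉ F.1 ∧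
    eta box dia x ∩ (eta box dia y)ᶜ ⊆ X}

section ExhaustingSequence

variable {α : Type*} {f : α → α} {t : ℕ → α}

theorem map_top_of_iSup_eq_top [CompleteLattice α] (hf : Monotone f) (h_zero : t 0 = ⊥)
    (h_succ : ∀ n, t (n + 1) ≤ f (t n)) (h_iSup : ⨆ n, t n = ⊤) : f ⊤ = ⊤ := by
  refine top_unique (h_iSup.ge.trans (iSup_le fun n => ?_))
  cases n with
  | zero => exact h_zero ▸ bot_le
  | succ n => exact (h_succ n).trans (hf le_top)

theorem le_of_inf_map_le_of_iSup_eq_top [Order.Frame α] (hf : Monotone f)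
    (hf_inf : ∀ a b, f a ⊓ f b ≤ f (a ⊓ b)) (h_zero : t 0 = ⊥)
    (h_succ : ∀ n, t (n + 1) ≤ f (t n)) (h_iSup : ⨆ n, t n = ⊤) {a b : α}
    (ha : a ≤ f a) (hab : a ⊓ f b ≤ b) : a ≤ b := by
  have inf_le : ∀ n, a ⊓ t n ≤ b := by
    intro n
    induction n with
    | zero => simp [h_zero]
    | succ n ih =>
      have le_map : a ⊓ t (n + 1) ≤ f b :=
        calc a ⊓ t (n + 1) ≤ f a ⊓ f (t n) := inf_le_inf ha (h_succ n)
          _ ≤ f (a ⊓ t n) := hf_inf a (t n)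
          _ ≤ f b := hf ih
      exact (le_inf inf_le_left le_map).trans hab
  calc a = ⨆ n, a ⊓ t n := by rw [← inf_iSup_eq, h_iSup, inf_top_eq]
    _ ≤ b := iSup_le inf_le

end ExhaustingSequence

section CanonicalBox

variable {A : Type*} [DistribLattice A] [BoundedOrder A] {box dia : A → A}

theorem IsGLDFilter.inf_mem_iff {F : Set A} (hF : IsGLDFilter box dia F) {x y : A} :
    x ⊓ y ∈ F ↔ x ∈ F ∧ y ∈ F :=
  ⟨fun hxy => ⟨hF.mem_of_le _ _ hxy inf_le_left, hF.mem_of_le _ _ hxy inf_le_right⟩,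
    fun hxy => hF.inf_mem _ _ hxy.1 hxy.2⟩

theorem IsGLDFilter.sup_mem_iff {F : Set A} (hF : IsGLDFilter box dia F) {x y : A} :
    x ⊔ y ∈ F ↔ x ∈ F ∨ y ∈ F :=
  ⟨hF.prime x y, fun hxy => hxy.elim (fun hx => hF.mem_of_le _ _ hx le_sup_left)
    (fun hy => hF.mem_of_le _ _ hy le_sup_right)⟩

theorem eta_mono : Monotone (eta box dia) :=
  fun x y hxy F hx => F.2.mem_of_le x y hx hxy

theorem eta_bot : eta box dia ⊥ = ∅ :=
  Set.eq_empty_of_forall_notMem fun F => F.2.bot_not_mem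

theorem eta_inf (x y : A) : eta box dia (x ⊓ y) = eta box dia x ∩ eta box dia y :=
  Set.ext fun F => F.2.inf_mem_iff

theorem eta_sup (x y : A) : eta box dia (x ⊔ y) = eta box dia x ∪ eta box dia y :=
  Set.ext fun F => F.2.sup_mem_iff

/-- The set of GLD-filters containing `x` and omitting `y`. The canonical neighborhoods of `F`
are the supersets of those `basicClopen box dia x y` with
`F ∈ basicClopen box dia (box x) (dia y)`. -/
def basicClopen (box dia : A → A) (x y : A) : Set (GLDFilter A box dia) :=
  eta box dia x ∩ (eta box dia y)ᶜ

theorem basicClopen_subset_basicClopen {x x' y y' : A} (hx : x ≤ x') (hy : y' ≤ y) :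
    basicClopen box dia x y ⊆ basicClopen box dia x' y' :=
  Set.inter_subset_inter (eta_mono hx) (Set.compl_subset_compl.2 (eta_mono hy))

theorem basicClopen_inter_basicClopen (x y x' y' : A) :
    basicClopen box dia x y ∩ basicClopen box dia x' y' =
      basicClopen box dia (x ⊓ x') (y ⊔ y') := by
  simp only [basicClopen, eta_inf, eta_sup, Set.compl_union, Set.inter_inter_inter_comm]

theorem mem_boxZ_canonN_iff {F : GLDFilter A box dia} {X : Set (GLDFilter A box dia)} :
    F ∈ boxZ box dia (canonN box dia) X ↔
      ∃ x y, F ∈ basicClopen box dia (box x) (dia y) ∧ basicClopen box dia x y ⊆ X :=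
  exists₂_congr fun _ _ => and_assoc.symm

theorem basicClopen_subset_boxZ_canonN (x y : A) :
    basicClopen box dia (box x) (dia y) ⊆
      boxZ box dia (canonN box dia) (basicClopen box dia x y) :=
  fun _ hF => mem_boxZ_canonN_iff.2 ⟨x, y, hF, subset_rfl⟩

theorem boxZ_canonN_mono : Monotone (boxZ box dia (canonN box dia)) :=
  fun _ _ hXY _ ⟨x, y, hx, hy, hxy⟩ => ⟨x, y, hx, hy, hxy.trans hXY⟩

theorem basicClopen_iterate_zero : basicClopen box dia (box^[0] ⊥) (dia^[0] ⊤) = ∅ := by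
  rw [basicClopen, Function.iterate_zero_apply, eta_bot, Set.empty_inter]

theorem basicClopen_iterate_succ_subset (n : ℕ) :
    basicClopen box dia (box^[n + 1] ⊥) (dia^[n + 1] ⊤) ⊆
      boxZ box dia (canonN box dia) (basicClopen box dia (box^[n] ⊥) (dia^[n] ⊤)) := by
  simpa only [Function.iterate_succ_apply'] using basicClopen_subset_boxZ_canonN _ _

theorem iUnion_basicClopen_iterate :
    ⋃ n : ℕ, basicClopen box dia (box^[n] ⊥) (dia^[n] ⊤) = Set.univ :=
  Set.eq_univ_of_forall fun F =>
    let ⟨n, h_dia, h_box⟩ := F.2.gld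
    Set.mem_iUnion.2 ⟨n, h_box, h_dia⟩

theorem boxZ_canonN_univ : boxZ box dia (canonN box dia) Set.univ = Set.univ :=
  map_top_of_iSup_eq_top boxZ_canonN_mono basicClopen_iterate_zero
    basicClopen_iterate_succ_subset iUnion_basicClopen_iterate

theorem boxZ_canonN_inter (box_inf : ∀ x y, box x ⊓ box y ≤ box (x ⊓ y))
    (dia_sup : ∀ x y, dia (x ⊔ y) ≤ dia x ⊔ dia y) (X Y : Set (GLDFilter A box dia)) :
    boxZ box dia (canonN box dia) (X ∩ Y) =
      boxZ box dia (canonN box dia) X ∩ boxZ box dia (canonN box dia) Y := by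
  refine (boxZ_canonN_mono.map_inf_le X Y).antisymm ?_
  rintro F ⟨hX, hY⟩
  obtain ⟨x, y, hF, hxy⟩ := mem_boxZ_canonN_iff.1 hX
  obtain ⟨x', y', hF', hxy'⟩ := mem_boxZ_canonN_iff.1 hY
  refine mem_boxZ_canonN_iff.2 ⟨x ⊓ x', y ⊔ y', ?_, ?_⟩
  · apply basicClopen_subset_basicClopen (box_inf x x') (dia_sup y y')
    rw [← basicClopen_inter_basicClopen]
    exact ⟨hF, hF'⟩
  · rw [← basicClopen_inter_basicClopen]
    exact Set.inter_subset_inter hxy hxy'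

theorem basicClopen_subset_boxZ_canonN_self (box_trans : ∀ x, box x ≤ box (box x))
    (dia_trans : ∀ x, dia (dia x) ≤ dia x) (x y : A) :
    basicClopen box dia (box x) (dia y) ⊆
      boxZ box dia (canonN box dia) (basicClopen box dia (box x) (dia y)) :=
  (basicClopen_subset_basicClopen (box_trans x) (dia_trans y)).trans
    (basicClopen_subset_boxZ_canonN (box x) (dia y))

theorem boxZ_canonN_loeb (box_inf : ∀ x y, box x ⊓ box y ≤ box (x ⊓ y))
    (dia_sup : ∀ x y, dia (x ⊔ y) ≤ dia x ⊔ dia y) (box_trans : ∀ x, box x ≤ box (box x))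
    (dia_trans : ∀ x, dia (dia x) ≤ dia x) (X : Set (GLDFilter A box dia)) :
    boxZ box dia (canonN box dia) ((boxZ box dia (canonN box dia) X)ᶜ ∪ X) ⊆
      boxZ box dia (canonN box dia) X := by
  intro F hF
  obtain ⟨x, y, hF, hxy⟩ := mem_boxZ_canonN_iff.1 hF
  set S := basicClopen box dia x y ∩ basicClopen box dia (box x) (dia y) with hS
  have subset_box : basicClopen box dia (box x) (dia y) ⊆ boxZ box dia (canonN box dia) S := by
    rw [hS, boxZ_canonN_inter box_inf dia_sup]
    exact Set.subset_inter (basicClopen_subset_boxZ_canonN x y)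
      (basicClopen_subset_boxZ_canonN_self box_trans dia_trans x y)
  have inter_subset : S ∩ boxZ box dia (canonN box dia) X ⊆ X :=
    fun G ⟨hG, hGX⟩ => (hxy hG.1).resolve_left (not_not_intro hGX)
  have S_subset : S ⊆ X :=
    le_of_inf_map_le_of_iSup_eq_top boxZ_canonN_mono
      (fun Y Z => (boxZ_canonN_inter box_inf dia_sup Y Z).ge) basicClopen_iterate_zero
      basicClopen_iterate_succ_subset iUnion_basicClopen_iterate
      (Set.inter_subset_right.trans subset_box) inter_subset
  exact boxZ_canonN_mono S_subset (subset_box hF)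

end CanonicalBox

theorem stmt6_general {A : Type*} [DistribLattice A] [BoundedOrder A] (box dia : A → A)
    (box_inf : ∀ x y, box x ⊓ box y ≤ box (x ⊓ y))
    (dia_sup : ∀ x y, dia (x ⊔ y) ≤ dia x ⊔ dia y)
    (box_trans : ∀ x, box x ≤ box (box x)) (dia_trans : ∀ x, dia (dia x) ≤ dia x) :
    boxZ box dia (canonN box dia) Set.univ = Set.univ ∧
    (∀ X Y : Set (GLDFilter A box dia),
      boxZ box dia (canonN box dia) (X ∩ Y) =
        boxZ box dia (canonN box dia) X ∩ boxZ box dia (canonN box dia) Y) ∧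
    (∀ X : Set (GLDFilter A box dia),
      boxZ box dia (canonN box dia) ((boxZ box dia (canonN box dia) X)ᶜ ∪ X) ⊆
        boxZ box dia (canonN box dia) X) :=
  ⟨boxZ_canonN_univ, boxZ_canonN_inter box_inf dia_sup,
    boxZ_canonN_loeb box_inf dia_sup box_trans dia_trans⟩

/-- For a GLD-lattice `A`, the powerset of the set of GLD-filters with the
operator `boxZ` induced by the canonical neighborhood map is a GL-algebra. -/
theorem stmt6 {A : Type*} [DistribLattice A] [BoundedOrder A] (box dia : A → A)
    (h : IsGLDLattice box dia) :
    boxZ box dia (canonN box dia) Set.univ = Set.univ ∧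
    (∀ X Y : Set (GLDFilter A box dia),
      boxZ box dia (canonN box dia) (X ∩ Y) =
        boxZ box dia (canonN box dia) X ∩ boxZ box dia (canonN box dia) Y) ∧
    (∀ X : Set (GLDFilter A box dia),
      boxZ box dia (canonN box dia) ((boxZ box dia (canonN box dia) X)ᶜ ∪ X) ⊆
        boxZ box dia (canonN box dia) X) :=
  stmt6_general box dia (fun x y => (h.box_inf x y).ge) (fun x y => (h.dia_sup x y).le)
    h.box_le_box_box h.dia_dia_le
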